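/- Let u_0 ∈ ℂ_p with |π|^{1/(q+1)} ≤ |u_0| < 1 and set γ = |u_0|. Then Φ is injective on the open disk {u ∈ ℂ_p : |u − u_0| < (|π|·γ^{-2})^{1/(q-1)}}: if u, u' both lie in this disk and φ_0(u)·φ_1(u') = φ_1(u)·φ_0(u'), then u = u'. -/

import Mathlib

open Filter


/-- The coefficients `m_k(u)` of the quasi-logarithm of the Gross-Hopkins
universal deformation: `m_0 = 1`, `m_1(u) = u/π`, and
`m_k(u) = (u/π)·m_{k-1}(u^q) + (1/π)·m_{k-2}(u^{q²})`. -/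
noncomputable def ghm {C : Type*} [Field C] (π : C) (q : ℕ) : ℕ → C → C
  | 0, _ => 1
  | 1, u => u / π
  | (k+2), u => (u / π) * ghm π q (k+1) (u ^ q) + (1 / π) * ghm π q k (u ^ (q^2))

/-- First coordinate of the Gross-Hopkins period map:
`φ₀(u) = lim_k π^k · m_{2k}(u)`. -/
noncomputable def ghphi0 {C : Type*} [NormedField C] (π : C) (q : ℕ) (u : C) : C :=
  limUnder atTop (fun k => π ^ k * ghm π q (2*k) u)

/-- Second coordinate of the Gross-Hopkins period map:
`φ₁(u) = lim_{k≥1} π^k · m_{2k-1}(u)`. -/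
noncomputable def ghphi1 {C : Type*} [NormedField C] (π : C) (q : ℕ) (u : C) : C :=
  limUnder atTop (fun k => π ^ (k+1) * ghm π q (2*k+1) u)

lemma norm_sub_le_max_norm {E : Type*} [SeminormedAddCommGroup E] [IsUltrametricDist E] (x y : E) :
    ‖x - y‖ ≤ max ‖x‖ ‖y‖ := by
  simpa only [sub_eq_add_neg, norm_neg] using IsUltrametricDist.norm_add_le_max x (-y)

/-- Right-hand form of the recursion defining `ghm`: it keeps the argument `u` fixed. -/
lemma ghm_add_two {C : Type*} [Field C] (π : C) (q : ℕ) : ∀ (n : ℕ) (u : C),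
    ghm π q (n + 2) u = (ghm π q (n + 1) u * u ^ q ^ (n + 1) + ghm π q n u) / π
  | 0, u => by simp only [ghm]; ring
  | 1, u => by simp only [ghm, ← pow_mul]; ring
  | n + 2, u => by
    have h1 := ghm_add_two π q (n + 1) (u ^ q)
    have h2 := ghm_add_two π q n (u ^ q ^ 2)
    rw [ghm, h1, h2, ghm.eq_3 π q u (n + 1), ghm.eq_3 π q u n]
    simp only [← pow_mul]
    ring

/-- A bound for `‖ghm π q n u‖` on the disk `‖u‖ ≤ γ`, where `ϖ = ‖π‖`. -/
noncomputable def ghmBound (ϖ γ : ℝ) (q : ℕ) : ℕ → ℝ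
  | 0 => 1
  | 1 => γ / ϖ
  | (n + 2) => max (ghmBound ϖ γ q n) (ghmBound ϖ γ q (n + 1) * γ ^ q ^ (n + 1)) / ϖ

lemma norm_ghm_le {C : Type*} [NormedField C] [IsUltrametricDist C] (π : C) (q : ℕ) {γ : ℝ}
    {u : C} (hu : ‖u‖ ≤ γ) : ∀ n, ‖ghm π q n u‖ ≤ ghmBound ‖π‖ γ q n
  | 0 => by simp [ghm, ghmBound]
  | 1 => by
    simp only [ghm, ghmBound, norm_div]
    gcongr
  | n + 2 => by
    have h0 := norm_ghm_le π q hu n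
    have h1 := norm_ghm_le π q hu (n + 1)
    rw [ghm_add_two, ghmBound, norm_div]
    gcongr
    refine (IsUltrametricDist.norm_add_le_max _ _).trans ?_
    rw [max_comm, norm_mul, norm_pow]
    have := (norm_nonneg _).trans h1
    gcongr

lemma ghmBound_nonneg {ϖ γ : ℝ} (hϖ : 0 ≤ ϖ) (hγ : 0 ≤ γ) (q : ℕ) :
    ∀ n, 0 ≤ ghmBound ϖ γ q n
  | 0 => zero_le_one
  | 1 => div_nonneg hγ hϖ
  | n + 2 => div_nonneg (le_max_of_le_left (ghmBound_nonneg hϖ hγ q n)) hϖ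

/-- Recursion for the normalized casoratian of the sequences `ghm π q · u` and `ghm π q · v`. -/
lemma ghm_casoratian_succ {C : Type*} [Field C] {π : C} (hπ : π ≠ 0) (q n : ℕ) (u v : C) :
    π ^ (n + 2) * (ghm π q (n + 2) u * ghm π q (n + 1) v
        - ghm π q (n + 1) u * ghm π q (n + 2) v)
      = π ^ (n + 1) * (ghm π q (n + 1) u * ghm π q (n + 1) v
          * (u ^ q ^ (n + 1) - v ^ q ^ (n + 1)))
        - π ^ (n + 1) * (ghm π q (n + 1) u * ghm π q n v - ghm π q n u * ghm π q (n + 1) v) := by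
  rw [ghm_add_two, ghm_add_two]
  field_simp
  ring

/-- Contraction estimate for a sequence satisfying the bound of iterated `q`-th power differences. -/
lemma exists_contraction_factor {ϖ γ : ℝ} (hϖ0 : 0 < ϖ) (hϖ1 : ϖ < 1) (hγ0 : 0 ≤ γ) (hγ1 : γ < 1)
    {q : ℕ} (hq : 2 ≤ q) {e : ℕ → ℝ} (he : ∀ n, 0 ≤ e n) (he0 : e 0 < 1)
    (heγ : e 0 ^ (q - 1) * γ ^ 2 < ϖ) (hstep : ∀ n, e (n + 1) ≤ max (e n ^ q) (ϖ * e n)) (n : ℕ) :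
    ∃ f, 0 ≤ f ∧ f < 1 ∧ e (n + 1) ≤ f * e n ∧ γ ^ (2 * q ^ n) * e (n + 1) ≤ ϖ * f * e n := by
  obtain ⟨k, rfl⟩ : ∃ k, q = k + 2 := ⟨q - 2, by omega⟩
  simp only [show k + 2 - 1 = k + 1 from rfl] at heγ
  have key : e n < 1 ∧ e n ^ (k + 1) * γ ^ (2 * (k + 2) ^ n) < ϖ := by
    induction n with
    | zero => simpa using ⟨he0, heγ⟩
    | succ n ih =>
      obtain ⟨h1, h2⟩ := ih
      have hen := he n
      have hγn : γ ^ (2 * (k + 2) ^ (n + 1)) < 1 := pow_lt_one₀ hγ0 hγ1 (by positivity)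
      have hγn0 : 0 ≤ γ ^ (2 * (k + 2) ^ (n + 1)) := by positivity
      rcases le_max_iff.1 (hstep n) with h | h
      · refine ⟨h.trans_lt (pow_lt_one₀ hen h1 (by omega)), ?_⟩
        calc e (n + 1) ^ (k + 1) * γ ^ (2 * (k + 2) ^ (n + 1))
            ≤ (e n ^ (k + 2)) ^ (k + 1) * γ ^ (2 * (k + 2) ^ (n + 1)) := by
              gcongr; exact he _
          _ = (e n ^ (k + 1) * γ ^ (2 * (k + 2) ^ n)) ^ (k + 2) := by
              rw [mul_pow, ← pow_mul, ← pow_mul, ← pow_mul]; ring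
          _ < ϖ ^ (k + 2) := by gcongr
          _ ≤ ϖ := pow_le_of_le_one hϖ0.le hϖ1.le (by omega)
      · have h3 : e (n + 1) ≤ ϖ := h.trans (mul_le_of_le_one_right hϖ0.le h1.le)
        refine ⟨h3.trans_lt hϖ1, ?_⟩
        calc e (n + 1) ^ (k + 1) * γ ^ (2 * (k + 2) ^ (n + 1))
            ≤ ϖ ^ (k + 1) * γ ^ (2 * (k + 2) ^ (n + 1)) := by gcongr; exact he _
          _ < ϖ ^ (k + 1) := mul_lt_of_lt_one_right (by positivity) hγn
          _ ≤ ϖ := pow_le_of_le_one hϖ0.le hϖ1.le (by omega)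
  obtain ⟨h1, h2⟩ := key
  have hen := he n
  set G := γ ^ (2 * (k + 2) ^ n) with hG
  have hG1 : G < 1 := pow_lt_one₀ hγ0 hγ1 (by positivity)
  have hG0 : 0 ≤ G := by positivity
  rcases le_max_iff.1 (hstep n) with h | h
  · refine ⟨max (e n ^ (k + 1)) (e n ^ (k + 1) * G / ϖ), by positivity, ?_, ?_, ?_⟩
    · exact max_lt (pow_lt_one₀ hen h1 (by omega)) ((div_lt_one hϖ0).2 h2)
    · calc e (n + 1) ≤ e n ^ (k + 1) * e n := by rw [← pow_succ]; exact h
        _ ≤ _ := by gcongr; exact le_max_left _ _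
    · calc G * e (n + 1) ≤ G * e n ^ (k + 2) := by gcongr
        _ = ϖ * (e n ^ (k + 1) * G / ϖ) * e n := by field_simp; ring
        _ ≤ _ := by gcongr; exact le_max_right _ _
  · refine ⟨max ϖ G, by positivity, max_lt hϖ1 hG1, ?_, ?_⟩
    · exact h.trans (by gcongr; exact le_max_left _ _)
    · calc G * e (n + 1) ≤ G * (ϖ * e n) := by gcongr
        _ = ϖ * G * e n := by ring
        _ ≤ _ := by gcongr; exact le_max_right _ _

lemma ghmBound_sq_mul_lt {ϖ γ : ℝ} (hϖ0 : 0 < ϖ) (hϖ1 : ϖ < 1) (hγ0 : 0 ≤ γ) (hγ1 : γ < 1)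
    {q : ℕ} (hq : 2 ≤ q) {e : ℕ → ℝ} (he : ∀ n, 0 ≤ e n) (he0 : e 0 < 1) (he0' : 0 < e 0)
    (heγ : e 0 ^ (q - 1) * γ ^ 2 < ϖ) (hstep : ∀ n, e (n + 1) ≤ max (e n ^ q) (ϖ * e n)) (n : ℕ) :
    ϖ ^ (n + 1) * ghmBound ϖ γ q (n + 1) ^ 2 * e (n + 1) < e 0 := by
  have hf := exists_contraction_factor hϖ0 hϖ1 hγ0 hγ1 hq he he0 heγ hstep
  suffices H : ϖ ^ n * ghmBound ϖ γ q n ^ 2 * e n ≤ e 0 ∧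
      ϖ ^ (n + 1) * ghmBound ϖ γ q (n + 1) ^ 2 * e (n + 1) < e 0 from H.2
  induction n with
  | zero =>
    refine ⟨by simp [ghmBound], ?_⟩
    obtain ⟨f, hf0, hf1, -, h⟩ := hf 0
    calc ϖ ^ (0 + 1) * ghmBound ϖ γ q (0 + 1) ^ 2 * e (0 + 1)
        = γ ^ (2 * q ^ 0) * e (0 + 1) / ϖ := by
          simp only [ghmBound, zero_add, pow_one, pow_zero, mul_one]; field_simp
      _ ≤ ϖ * f * e 0 / ϖ := by gcongr
      _ = f * e 0 := by field_simp
      _ < e 0 := mul_lt_of_lt_one_left he0' hf1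
  | succ n ih =>
    obtain ⟨h0, h1⟩ := ih
    refine ⟨h1.le, ?_⟩
    obtain ⟨f, hf0, hf1, hfa, -⟩ := hf n
    obtain ⟨g, hg0, hg1, hga, hgb⟩ := hf (n + 1)
    have hen := he n
    have hen' := he (n + 1)
    rw [ghmBound]
    set A := ghmBound ϖ γ q n
    set B := ghmBound ϖ γ q (n + 1)
    rcases le_total A (B * γ ^ q ^ (n + 1)) with h | h
    · rw [max_eq_right h]
      calc ϖ ^ (n + 1 + 1) * (B * γ ^ q ^ (n + 1) / ϖ) ^ 2 * e (n + 1 + 1)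
          = ϖ ^ n * B ^ 2 * (γ ^ (2 * q ^ (n + 1)) * e (n + 1 + 1)) := by
            field_simp; ring
        _ ≤ ϖ ^ n * B ^ 2 * (ϖ * g * e (n + 1)) := by gcongr
        _ = g * (ϖ ^ (n + 1) * B ^ 2 * e (n + 1)) := by ring
        _ ≤ 1 * (ϖ ^ (n + 1) * B ^ 2 * e (n + 1)) := by gcongr
        _ < e 0 := by rwa [one_mul]
    · rw [max_eq_left h]
      calc ϖ ^ (n + 1 + 1) * (A / ϖ) ^ 2 * e (n + 1 + 1)
          = ϖ ^ n * A ^ 2 * e (n + 1 + 1) := by field_simp; ring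
        _ ≤ ϖ ^ n * A ^ 2 * (g * (f * e n)) := by
            gcongr; exact hga.trans (by gcongr)
        _ = g * f * (ϖ ^ n * A ^ 2 * e n) := by ring
        _ ≤ g * f * e 0 := by gcongr
        _ < e 0 := mul_lt_of_lt_one_left he0' (mul_lt_one_of_nonneg_of_lt_one_left hg0 hg1 hf1.le)

/-- The normalized casoratian at `u, v` has the same absolute value as its leading term `u - v`. -/
lemma norm_ghm_casoratian {C : Type*} [NormedField C] [IsUltrametricDist C] {π : C}
    (hπ0 : 0 < ‖π‖) (hπ1 : ‖π‖ < 1) {γ : ℝ} (hγ1 : γ < 1) {q : ℕ} (hq : 2 ≤ q)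
    (hpow : ∀ x y : C, ‖x‖ ≤ 1 → ‖y‖ ≤ 1 →
      ‖x ^ q - y ^ q‖ ≤ max (‖x - y‖ ^ q) (‖π‖ * ‖x - y‖))
    {u v : C} (hu : ‖u‖ ≤ γ) (hv : ‖v‖ ≤ γ) (huv : u ≠ v)
    (h : ‖u - v‖ ^ (q - 1) * γ ^ 2 < ‖π‖) (n : ℕ) :
    ‖π ^ (n + 1) * (ghm π q (n + 1) u * ghm π q n v - ghm π q n u * ghm π q (n + 1) v)‖
      = ‖u - v‖ := by
  have hγ0 : 0 ≤ γ := (norm_nonneg u).trans hu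
  have hd : 0 < ‖u - v‖ := norm_pos_iff.2 (sub_ne_zero.2 huv)
  have hd1 : ‖u - v‖ < 1 :=
    (norm_sub_le_max_norm u v).trans_lt ((max_le hu hv).trans_lt hγ1)
  have hT := ghmBound_sq_mul_lt (e := fun n => ‖u ^ q ^ n - v ^ q ^ n‖) hπ0 hπ1 hγ0 hγ1 hq
    (fun n => norm_nonneg _) (by simpa using hd1) (by simpa using hd) (by simpa using h)
    (fun n => by
      have := hpow (u ^ q ^ n) (v ^ q ^ n)
        (by rw [norm_pow]; exact pow_le_one₀ (norm_nonneg _) (hu.trans hγ1.le))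
        (by rw [norm_pow]; exact pow_le_one₀ (norm_nonneg _) (hv.trans hγ1.le))
      simpa only [← pow_mul, ← pow_succ] using this)
  have hπ : π ≠ 0 := norm_pos_iff.1 hπ0
  induction n with
  | zero =>
    congr 1
    simp only [ghm]
    field_simp
    ring
  | succ n ih =>
    have hlt : ‖π ^ (n + 1) * (ghm π q (n + 1) u * ghm π q (n + 1) v
        * (u ^ q ^ (n + 1) - v ^ q ^ (n + 1)))‖ < ‖u - v‖ := by
      refine lt_of_le_of_lt ?_ (by simpa using hT n)
      rw [norm_mul, norm_mul, norm_mul, norm_pow, sq, ← mul_assoc]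
      have := ghmBound_nonneg hπ0.le hγ0 q (n + 1)
      gcongr
      · exact norm_ghm_le π q hu _
      · exact norm_ghm_le π q hv _
    rw [ghm_casoratian_succ hπ, sub_eq_add_neg, IsUltrametricDist.norm_add_eq_max_of_norm_ne_norm,
      norm_neg, ih, max_eq_right hlt.le]
    rw [norm_neg, ih]
    exact hlt.ne

/-- The limits defining the period map exist on the open unit disk. -/
lemma tendsto_ghphi {C : Type*} [NormedField C] [IsUltrametricDist C] [CompleteSpace C] {π : C}
    (hπ0 : 0 < ‖π‖) {q : ℕ} (hq : 2 ≤ q) {u : C} (hu : ‖u‖ < 1) :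
    Tendsto (fun k => π ^ k * ghm π q (2 * k) u) atTop (nhds (ghphi0 π q u)) ∧
    Tendsto (fun k => π ^ (k + 1) * ghm π q (2 * k + 1) u) atTop (nhds (ghphi1 π q u)) := by
  have hπ : π ≠ 0 := norm_pos_iff.1 hπ0
  set a : ℕ → C := fun k => π ^ k * ghm π q (2 * k) u with ha
  set b : ℕ → C := fun k => π ^ (k + 1) * ghm π q (2 * k + 1) u with hb
  have hab : ∀ k, a (k + 1) = a k + b k * (u ^ q ^ (2 * k + 1) / π) := fun k => by
    simp only [ha, hb, show 2 * (k + 1) = 2 * k + 2 by ring, ghm_add_two]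
    field_simp
    ring
  have hba : ∀ k, b (k + 1) = b k + a (k + 1) * u ^ q ^ (2 * k + 2) := fun k => by
    simp only [ha, hb, show 2 * (k + 1) + 1 = 2 * k + 1 + 2 by ring, ghm_add_two π q (2 * k + 1)]
    rw [show 2 * (k + 1) = 2 * k + 1 + 1 by ring]
    field_simp
    ring
  have hz : Tendsto (fun n => u ^ q ^ n) atTop (nhds 0) :=
    (tendsto_pow_atTop_nhds_zero_of_norm_lt_one hu).comp
      (tendsto_pow_atTop_atTop_of_one_lt (by omega))
  have hx : Tendsto (fun k => u ^ q ^ (2 * k + 1) / π) atTop (nhds 0) := by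
    have := (hz.comp (tendsto_atTop_mono (fun k : ℕ => (by omega : k ≤ 2 * k + 1))
      tendsto_id)).div_const π
    simpa [Function.comp_def] using this
  have hy : Tendsto (fun k => u ^ q ^ (2 * k + 2)) atTop (nhds 0) :=
    hz.comp (tendsto_atTop_mono (fun k : ℕ => (by omega : k ≤ 2 * k + 2)) tendsto_id)
  obtain ⟨N, hN⟩ := eventually_atTop.1
    ((hx.norm.eventually_le_const (u := 1) (by simp)).and
      (hy.norm.eventually_le_const (u := 1) (by simp)))
  have hbd : ∀ k ≥ N, ‖a k‖ ≤ max ‖a N‖ ‖b N‖ ∧ ‖b k‖ ≤ max ‖a N‖ ‖b N‖ := fun k hk => by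
    induction k, hk using Nat.le_induction with
    | base => exact ⟨le_max_left _ _, le_max_right _ _⟩
    | succ k hk ih =>
      obtain ⟨h1, h2⟩ := hN k hk
      have h3 : ‖a (k + 1)‖ ≤ max ‖a N‖ ‖b N‖ := by
        rw [hab]
        refine (IsUltrametricDist.norm_add_le_max _ _).trans (max_le ih.1 ?_)
        rw [norm_mul]
        exact (mul_le_of_le_one_right (norm_nonneg _) h1).trans ih.2
      refine ⟨h3, ?_⟩
      rw [hba]
      refine (IsUltrametricDist.norm_add_le_max _ _).trans (max_le ih.2 ?_)
      rw [norm_mul]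
      exact (mul_le_of_le_one_right (norm_nonneg _) h2).trans h3
  have hca : CauchySeq a := by
    refine NonarchimedeanAddGroup.cauchySeq_of_tendsto_sub_nhds_zero ?_
    simp only [hab, add_sub_cancel_left]
    exact (isBoundedUnder_of_eventually_le (a := max ‖a N‖ ‖b N‖)
      (eventually_atTop.2 ⟨N, fun k hk => (hbd k hk).2⟩)).smul_tendsto_zero hx
  have hcb : CauchySeq b := by
    refine NonarchimedeanAddGroup.cauchySeq_of_tendsto_sub_nhds_zero ?_
    simp only [hba, add_sub_cancel_left]
    exact (isBoundedUnder_of_eventually_le (a := max ‖a N‖ ‖b N‖)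
      (eventually_atTop.2 ⟨N, fun k hk => (hbd (k + 1) (by omega)).1⟩)).smul_tendsto_zero hy
  exact ⟨CauchySeq.tendsto_limUnder hca, CauchySeq.tendsto_limUnder hcb⟩

lemma norm_pow_sub_pow_le {C : Type*} [NormedField C] [IsUltrametricDist C] {p : ℕ}
    (hp : p.Prime) {ϖ : ℝ} (hpϖ : ‖(p : C)‖ ≤ ϖ) (r : ℕ) {x y : C} (hx : ‖x‖ ≤ 1) (hy : ‖y‖ ≤ 1) :
    ‖x ^ p ^ r - y ^ p ^ r‖ ≤ max (‖x - y‖ ^ p ^ r) (ϖ * ‖x - y‖) := by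
  have hd : ‖x - y‖ ≤ 1 := (norm_sub_le_max_norm x y).trans (max_le hx hy)
  have key := add_pow_prime_pow_eq hp (x - y) y r
  rw [sub_add_cancel] at key
  rw [key, add_right_comm, add_sub_cancel_right]
  refine (IsUltrametricDist.norm_add_le_max _ _).trans (max_le_max (norm_pow _ _).le ?_)
  rw [norm_mul, norm_mul, norm_mul]
  have hsum : ‖∑ k ∈ Finset.Ioo 0 (p ^ r),
      (x - y) ^ (k - 1) * y ^ (p ^ r - k - 1) * (((p ^ r).choose k / p : ℕ) : C)‖ ≤ 1 := by
    refine IsUltrametricDist.norm_sum_le_of_forall_le_of_nonneg zero_le_one fun k _ => ?_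
    rw [norm_mul, norm_mul, norm_pow, norm_pow]
    exact mul_le_one₀ (mul_le_one₀ (pow_le_one₀ (norm_nonneg _) hd) (by positivity)
      (pow_le_one₀ (norm_nonneg _) hy)) (norm_nonneg _) (IsUltrametricDist.norm_natCast_le_one C _)
  have hϖ := (norm_nonneg _).trans hpϖ
  calc _ ≤ ϖ * ‖x - y‖ * 1 * 1 := by gcongr
    _ = _ := by ring

theorem gross_hopkins_injective_around {p : ℕ} [Fact p.Prime] {C : Type*} [NormedField C] [IsUltrametricDist C]
    [CompleteSpace C] [IsAlgClosed C] [Algebra ℚ_[p] C]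
    (hiso : ∀ x : ℚ_[p], ‖algebraMap ℚ_[p] C x‖ = ‖x‖)
    (K : IntermediateField ℚ_[p] C) (hKfin : FiniteDimensional ℚ_[p] K)
    (q : ℕ) (hq : ∃ r : ℕ, 0 < r ∧ q = p ^ r)
    (π : C) (hπK : π ∈ K) (hπ0 : 0 < ‖π‖) (hπ1 : ‖π‖ < 1)
    (hπunif : ∀ x ∈ K, ‖x‖ < 1 → ‖x‖ ≤ ‖π‖)
    (hres : ∃ S : Finset C, S.card = q ∧ (∀ s ∈ S, s ∈ K ∧ ‖s‖ ≤ 1) ∧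
      (∀ x ∈ K, ‖x‖ ≤ 1 → ∃ s ∈ S, ‖x - s‖ < 1) ∧
      (∀ s ∈ S, ∀ t ∈ S, s ≠ t → ‖s - t‖ = 1))
    (u0 : C) (γ : ℝ) (hγ : γ = ‖u0‖)
    (hlow : ‖π‖ ^ ((1:ℝ)/(q+1)) ≤ γ) (hup : γ < 1) :
    ∀ u u' : C,
      ‖u - u0‖ < (‖π‖ * γ ^ (-(2:ℝ))) ^ ((1:ℝ)/((q:ℝ)-1)) →
      ‖u' - u0‖ < (‖π‖ * γ ^ (-(2:ℝ))) ^ ((1:ℝ)/((q:ℝ)-1)) →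
      ghphi0 π q u * ghphi1 π q u' = ghphi1 π q u * ghphi0 π q u' → u = u' := by
  obtain ⟨r, hr, rfl⟩ := hq
  have hp : p.Prime := Fact.out
  have hq2 : 2 ≤ p ^ r := hp.two_le.trans (Nat.le_self_pow hr.ne' p)
  have hq1 : (0 : ℝ) < ((p ^ r : ℕ) : ℝ) - 1 := by
    have : (2 : ℝ) ≤ ((p ^ r : ℕ) : ℝ) := by exact_mod_cast hq2
    linarith
  have hcast : (((p ^ r - 1 : ℕ) : ℕ) : ℝ) = ((p ^ r : ℕ) : ℝ) - 1 := by
    rw [Nat.cast_sub (by omega), Nat.cast_one]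
  have hpπ : ‖(p : C)‖ ≤ ‖π‖ := by
    refine hπunif _ (natCast_mem K p) ?_
    have := hiso (p : ℚ_[p])
    rw [map_natCast] at this
    rw [this]
    exact Padic.norm_p_lt_one
  have hγ0 : 0 < γ := (Real.rpow_pos_of_pos hπ0 _).trans_le hlow
  have hπγ : ‖π‖ ≤ γ ^ (p ^ r + 1) := by
    have h := pow_le_pow_left₀ (Real.rpow_nonneg hπ0.le _) hlow (p ^ r + 1)
    rw [← Real.rpow_natCast, ← Real.rpow_mul hπ0.le] at h
    rwa [Nat.cast_add_one, one_div_mul_cancel (by positivity), Real.rpow_one] at h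
  rw [show ‖π‖ * γ ^ (-(2 : ℝ)) = ‖π‖ / γ ^ 2 by
    rw [Real.rpow_neg hγ0.le, Real.rpow_ofNat, div_eq_mul_inv]]
  set R := (‖π‖ / γ ^ 2) ^ ((1 : ℝ) / (((p ^ r : ℕ) : ℝ) - 1)) with hR
  have hR0 : 0 ≤ R := by positivity
  have hRpow : R ^ (p ^ r - 1) = ‖π‖ / γ ^ 2 := by
    rw [hR, ← Real.rpow_natCast, ← Real.rpow_mul (by positivity), hcast,
      one_div_mul_cancel hq1.ne', Real.rpow_one]
  have hRγ : R ≤ γ := by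
    refine le_of_pow_le_pow_left₀ (n := p ^ r - 1) (by omega) hγ0.le ?_
    rw [hRpow, div_le_iff₀ (by positivity), ← pow_add]
    rwa [show p ^ r - 1 + 2 = p ^ r + 1 by omega]
  have hdisk : ∀ w, ‖w - u0‖ < R → ‖w‖ ≤ γ := fun w hw => by
    rw [← sub_add_cancel w u0]
    exact (IsUltrametricDist.norm_add_le_max _ _).trans (max_le (hw.le.trans hRγ) hγ.ge)
  intro u u' hu hu' heq
  by_contra hne
  have hd : ‖u - u'‖ < R := by
    rw [← sub_sub_sub_cancel_right u u' u0]
    exact (norm_sub_le_max_norm _ _).trans_lt (max_lt hu hu')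
  have hdπ : ‖u - u'‖ ^ (p ^ r - 1) * γ ^ 2 < ‖π‖ := by
    rw [← lt_div_iff₀ (by positivity), ← hRpow]
    exact pow_lt_pow_left₀ hd (norm_nonneg _) (by omega)
  obtain ⟨t0, t1⟩ := tendsto_ghphi hπ0 hq2 ((hdisk u hu).trans_lt hup)
  obtain ⟨t0', t1'⟩ := tendsto_ghphi hπ0 hq2 ((hdisk u' hu').trans_lt hup)
  have hlim := ((t1.mul t0').sub (t0.mul t1')).norm
  rw [heq, sub_self, norm_zero] at hlim
  have hconst : ∀ k, ‖π ^ (k + 1) * ghm π (p ^ r) (2 * k + 1) u * (π ^ k * ghm π (p ^ r) (2 * k) u')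
      - π ^ k * ghm π (p ^ r) (2 * k) u * (π ^ (k + 1) * ghm π (p ^ r) (2 * k + 1) u')‖
      = ‖u - u'‖ := fun k => by
    rw [← norm_ghm_casoratian hπ0 hπ1 hup hq2
      (fun x y hx hy => norm_pow_sub_pow_le hp hpπ r hx hy) (hdisk u hu) (hdisk u' hu') hne hdπ
      (2 * k)]
    congr 1
    ring
  simp only [hconst] at hlim
  exact hne (sub_eq_zero.1 (norm_eq_zero.1 (tendsto_nhds_unique tendsto_const_nhds hlim)))
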